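/- There exists a subshift Σ with follower entropy h_fol(Σ) = 0 and h_top(Σ) > 0 which has uncountably many maximum measures. -/

import Mathlib

open Filter Set MeasureTheory

namespace QFTPaper

variable {A : Type*} {B : Type*}

/-- The left shift on bi-infinite sequences over the alphabet `A`. -/
def shift (x : ℤ → A) : ℤ → A := fun n => x (n + 1)

/-- A subshift: a closed, shift-invariant subset of `A^ℤ`. -/
def IsSubshift [TopologicalSpace A] (X : Set (ℤ → A)) : Prop :=
  IsClosed X ∧ shift '' X = X

/-- The finite word `w` occurs in `x` at position `k`. -/
def OccursAt (w : List A) (x : ℤ → A) (k : ℤ) : Prop :=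
  ∀ i : Fin w.length, x (k + (i : ℕ)) = w.get i

/-- The language of `X`: words of length `n` occurring in elements of `X`
(at position `0`, which is no restriction by shift-invariance). -/
def Lang (X : Set (ℤ → A)) (n : ℕ) : Set (List A) :=
  { w | w.length = n ∧ ∃ x ∈ X, OccursAt w x 0 }

/-- Topological entropy of a subshift. -/
noncomputable def hTop (X : Set (ℤ → A)) : ℝ :=
  limsup (fun n : ℕ => Real.log (Nat.card ↥(Lang X n)) / (n : ℝ)) atTop

/-- Follower set of the finite word `w = A₋ₙ…A₀` (listed from `A₋ₙ` to `A₀`):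
the set of one-sided sequences `B₀B₁B₂…` with `B ∈ X` and `B₋ₙ…B₀ = A₋ₙ…A₀`,
realized by requiring `w` to occur in `B` at positions `0,…,n` and reading off
the tail of `B` starting at the position of the last letter of `w`.
For the empty word this gives `X₊` (by shift-invariance). -/
def fol (X : Set (ℤ → A)) (w : List A) : Set (ℕ → A) :=
  { y | ∃ B ∈ X, (∀ i : Fin w.length, B ((i : ℕ) : ℤ) = w.get i) ∧
        ∀ k : ℕ, y k = B ((w.length : ℤ) - 1 + (k : ℤ)) }

/-- `w = A₋ₙ…A₀` is a left constraint:
`∅ ≠ fol(A₋ₙ…A₀) ⊊ fol(A₋ₙ₊₁…A₀)`. -/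
def IsLeftConstraint (X : Set (ℤ → A)) (w : List A) : Prop :=
  w ≠ [] ∧ fol X w ≠ ∅ ∧ fol X w ⊂ fol X w.tail

/-- `𝒞(X, n)`: the set of left constraints of length `n`. -/
def LC (X : Set (ℤ → A)) (n : ℕ) : Set (List A) :=
  { w | w.length = n ∧ IsLeftConstraint X w }

/-- The left constraint entropy `h_𝒞(X) = limsup (1/n) log⁺ #𝒞(X,n)`. -/
noncomputable def hC (X : Set (ℤ → A)) : ℝ :=
  limsup (fun n : ℕ => max 0 (Real.log (Nat.card ↥(LC X n))) / (n : ℝ)) atTop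

/-- The time-reversed subshift `X̄`. -/
def rev (X : Set (ℤ → A)) : Set (ℤ → A) :=
  (fun x : ℤ → A => fun n : ℤ => x (-n)) '' X

/-- The symmetric constraint entropy `h_𝒮𝒞(X) = min (h_𝒞(X), h_𝒞(X̄))`. -/
noncomputable def hSC (X : Set (ℤ → A)) : ℝ := min (hC X) (hC (rev X))

/-- Subshift of quasi-finite type: `h_𝒮𝒞(X) < h_top(X)`. -/
def IsQFT [TopologicalSpace A] (X : Set (ℤ → A)) : Prop :=
  IsSubshift X ∧ hSC X < hTop X

/-- The word `B₋ₘ…B₀` read off from a one-sided past `b` (where `b j = B₋ⱼ`). -/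
def wordOf (b : ℕ → A) (m : ℕ) : List A :=
  (List.range (m + 1)).map fun j => b (m - j)

/-- An extendable left constraint: a left constraint `A₋ₙ…A₀` which admits a
one-sided past `B` extending it such that `B₋ₘ…B₀` is again a left constraint
for infinitely many `m`. -/
def IsExtendable (X : Set (ℤ → A)) (w : List A) : Prop :=
  IsLeftConstraint X w ∧
  ∃ b : ℕ → A, wordOf b (w.length - 1) = w ∧
    ∀ N : ℕ, ∃ m, N ≤ m ∧ IsLeftConstraint X (wordOf b m)

/-- `𝒞*(X, n)`: the set of extendable left constraints of length `n`. -/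
def ELC (X : Set (ℤ → A)) (n : ℕ) : Set (List A) :=
  { w | w.length = n ∧ IsExtendable X w }

/-- The extendable left constraint entropy `h*_𝒞(X)`. -/
noncomputable def hCstar (X : Set (ℤ → A)) : ℝ :=
  limsup (fun n : ℕ => Real.log (Nat.card ↥(ELC X n)) / (n : ℝ)) atTop

/-- `h*_𝒮𝒞(X) = min (h*_𝒞(X), h*_𝒞(X̄))`. -/
noncomputable def hSCstar (X : Set (ℤ → A)) : ℝ := min (hCstar X) (hCstar (rev X))

/-- Subshift of weak quasi-finite type: `h*_𝒮𝒞(X) < h_top(X)`. -/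
def IsWeakQFT [TopologicalSpace A] (X : Set (ℤ → A)) : Prop :=
  IsSubshift X ∧ hSCstar X < hTop X

/-- Subshift of finite type: defined by excluding a finite set of finite words. -/
def IsSFT (X : Set (ℤ → A)) : Prop :=
  ∃ F : Finset (List A), X = { x | ∀ w ∈ F, ∀ k : ℤ, ¬ OccursAt w x k }

/-- Sofic subshift: the image of an SFT under a continuous shift-commuting map. -/
def IsSofic [TopologicalSpace A] (X : Set (ℤ → A)) : Prop :=
  ∃ (B : Type) (_ : Fintype B) (Y : Set (ℤ → B)) (π : (ℤ → B) → (ℤ → A)),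
    IsSFT Y ∧
    (letI : TopologicalSpace B := ⊥
     Continuous π) ∧
    (∀ x : ℤ → B, π (shift x) = shift (π x)) ∧ π '' Y = X


/-- Topological conjugacy of subshifts: a homeomorphism commuting with the shifts. -/
def Conjugate [TopologicalSpace A] [TopologicalSpace B]
    (X : Set (ℤ → A)) (Y : Set (ℤ → B)) : Prop :=
  ∃ φ : X ≃ₜ Y, ∀ x x' : X, (x' : ℤ → A) = shift (x : ℤ → A) →
    (φ x' : ℤ → B) = shift (φ x : ℤ → B)

/-- The cylinder of a word of length `n` placed at positions `0,…,n-1`. -/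
def cylSet (n : ℕ) (w : Fin n → A) : Set (ℤ → A) :=
  { x | ∀ i : Fin n, x ((i : ℕ) : ℤ) = w i }

/-- Entropy of the partition of `A^ℤ` into cylinders of length `n`. -/
noncomputable def blockEntropy [Fintype A] [MeasurableSpace A]
    (μ : Measure (ℤ → A)) (n : ℕ) : ℝ :=
  ∑ w : Fin n → A, Real.negMulLog ((μ (cylSet n w)).toReal)

/-- Kolmogorov–Sinai entropy of a shift-invariant measure on `A^ℤ`,
computed with the natural (generating) partition into cylinders. -/
noncomputable def KSEntropy [Fintype A] [MeasurableSpace A]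
    (μ : Measure (ℤ → A)) : ℝ :=
  ⨅ n : ℕ, blockEntropy μ (n + 1) / (n + 1)

/-- A maximum measure: an ergodic shift-invariant Borel probability measure
carried by `X` whose Kolmogorov–Sinai entropy equals the topological entropy of `X`. -/
def IsMaxMeasure [Fintype A] [MeasurableSpace A]
    (X : Set (ℤ → A)) (μ : Measure (ℤ → A)) : Prop :=
  IsProbabilityMeasure μ ∧ μ Xᶜ = 0 ∧ Ergodic shift μ ∧ KSEntropy μ = hTop X

/-- The number of points of `X` fixed by the `n`-th power of the shift. -/
noncomputable def perCount (X : Set (ℤ → A)) (n : ℕ) : ℕ :=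
  Nat.card {x : ℤ → A | x ∈ X ∧ shift^[n] x = x}

/-- The follower entropy: growth rate of the number of distinct follower sets
of words of length `n`. -/
noncomputable def hFol (X : Set (ℤ → A)) : ℝ :=
  limsup (fun n : ℕ =>
    Real.log (Nat.card ↥(fol X '' Lang X n)) / (n : ℝ)) atTop


/-! ## Product of an ergodic system with a Bernoulli shift -/

theorem shift_iterate (k : ℕ) (x : ℤ → A) (n : ℤ) : shift^[k] x n = x (n + k) := by
  induction k generalizing x n with
  | zero => simp
  | succ k ih => rw [Function.iterate_succ_apply, ih]; simp only [shift]; congr 1; push_cast; ring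

theorem measurable_shift [MeasurableSpace A] : Measurable (shift : (ℤ → A) → (ℤ → A)) := by
  unfold shift; fun_prop

/-- The Bernoulli measure on `A^ℤ`. -/
noncomputable def bern [MeasurableSpace A] (ρ : Measure A) : Measure (ℤ → A) :=
  Measure.infinitePi (fun _ : ℤ => ρ)

instance [MeasurableSpace A] (ρ : Measure A) [IsProbabilityMeasure ρ] :
    IsProbabilityMeasure (bern ρ) := by unfold bern; infer_instance

theorem bern_shift [MeasurableSpace A] (ρ : Measure A) [IsProbabilityMeasure ρ] :
    MeasurePreserving shift (bern ρ) (bern ρ) := by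
  refine ⟨measurable_shift, ?_⟩
  exact Measure.map_infinitePi_infinitePi_of_inj (P := fun _ : ℤ => ρ) (f := fun n : ℤ => n + 1)
    (fun a b h => by simpa using h)

theorem bern_indep [MeasurableSpace A] (ρ : Measure A) [IsProbabilityMeasure ρ]
    (s : Finset ℤ) (k : ℕ) (hk : ∀ a ∈ s, ∀ b ∈ s, a ≠ b + k)
    (U V : Set (s → A)) (hU : MeasurableSet U) (hV : MeasurableSet V) :
    bern ρ ((fun b => s.restrict b) ⁻¹' U ∩ (fun b => s.restrict (shift^[k] b)) ⁻¹' V)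
      = bern ρ ((fun b => s.restrict b) ⁻¹' U) * bern ρ ((fun b => s.restrict b) ⁻¹' V) := by
  have h1 : ProbabilityTheory.iIndepFun (fun (i : ℤ) (b : ℤ → A) => b i) (bern ρ) :=
    ProbabilityTheory.iIndepFun_infinitePi (P := fun _ : ℤ => ρ) (X := fun _ a => a)
      (fun _ => measurable_id)
  let t : Finset ℤ := s.image (fun a => a + (k : ℤ))
  have hst : Disjoint s t := by
    rw [Finset.disjoint_left]
    intro a ha hat
    obtain ⟨b, hb, rfl⟩ := Finset.mem_image.1 hat
    exact hk _ ha b hb rfl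
  have h2 := h1.indepFun_finset s t hst (fun i => measurable_pi_apply i)
  let e : (t → A) → (s → A) := fun y i => y ⟨i + k, Finset.mem_image_of_mem _ i.2⟩
  have he : Measurable e := by fun_prop
  have h3 := h2.comp measurable_id he
  have h4 := h3.measure_inter_preimage_eq_mul U V hU hV
  have e1 : (id ∘ fun (a : ℤ → A) (i : s) => a i) = fun b => s.restrict b := rfl
  have e2 : (e ∘ fun (a : ℤ → A) (i : t) => a i) = fun b => s.restrict (shift^[k] b) := by
    funext b i
    simp [e, shift_iterate]
  rw [e1, e2] at h4
  rw [h4]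
  congr 1
  have h5 := ((bern_shift ρ).iterate k).measure_preimage
    (s := (fun b => s.restrict b) ⁻¹' V) ((Finset.measurable_restrict s hV).nullMeasurableSet)
  exact h5

variable {Ω : Type*} [MeasurableSpace Ω]

/-- Sets depending on finitely many Bernoulli coordinates. -/
def FinSets (Ω A : Type*) [MeasurableSpace Ω] [MeasurableSpace A] : Set (Set (Ω × (ℤ → A))) :=
  {F | ∃ s : Finset ℤ, ∃ F' : Set (Ω × (s → A)), MeasurableSet F' ∧
    F = (fun p : Ω × (ℤ → A) => (p.1, s.restrict p.2)) ⁻¹' F'}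

theorem FinSets.mono [MeasurableSpace A] {s t : Finset ℤ} (h : s ⊆ t) {F' : Set (Ω × (s → A))}
    (hF : MeasurableSet F') : ∃ G' : Set (Ω × (t → A)), MeasurableSet G' ∧
    (fun p : Ω × (ℤ → A) => (p.1, s.restrict p.2)) ⁻¹' F' =
    (fun p : Ω × (ℤ → A) => (p.1, t.restrict p.2)) ⁻¹' G' := by
  refine ⟨(fun p : Ω × (t → A) => (p.1, fun i : s => p.2 ⟨i, h i.2⟩)) ⁻¹' F', ?_, rfl⟩
  apply measurableSet_preimage _ hF
  fun_prop

theorem measurable_restr [MeasurableSpace A] (s : Finset ℤ) :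
    Measurable (fun p : Ω × (ℤ → A) => (p.1, s.restrict p.2)) :=
  measurable_fst.prodMk ((Finset.measurable_restrict s).comp measurable_snd)

theorem FinSets.isSetRing [MeasurableSpace A] : IsSetRing (FinSets Ω A) := by
  classical
  refine ⟨⟨∅, ∅, MeasurableSet.empty, by simp⟩, ?_, ?_⟩
  · rintro _ _ ⟨s, F, hF, rfl⟩ ⟨t, G, hG, rfl⟩
    obtain ⟨F', hF', e1⟩ := FinSets.mono (Finset.subset_union_left (s₁ := s) (s₂ := t)) hF
    obtain ⟨G', hG', e2⟩ := FinSets.mono (Finset.subset_union_right (s₁ := s) (s₂ := t)) hG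
    exact ⟨s ∪ t, F' ∪ G', hF'.union hG', by rw [e1, e2]; rfl⟩
  · rintro _ _ ⟨s, F, hF, rfl⟩ ⟨t, G, hG, rfl⟩
    obtain ⟨F', hF', e1⟩ := FinSets.mono (Finset.subset_union_left (s₁ := s) (s₂ := t)) hF
    obtain ⟨G', hG', e2⟩ := FinSets.mono (Finset.subset_union_right (s₁ := s) (s₂ := t)) hG
    exact ⟨s ∪ t, F' \ G', hF'.diff hG', by rw [e1, e2]; rfl⟩

theorem FinSets.generate [MeasurableSpace A] :
    (inferInstance : MeasurableSpace (Ω × (ℤ → A))) = MeasurableSpace.generateFrom (FinSets Ω A) := by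
  apply le_antisymm
  · refine sup_le ?_ ?_
    · rintro _ ⟨U, hU, rfl⟩
      apply MeasurableSpace.measurableSet_generateFrom
      exact ⟨∅, Prod.fst ⁻¹' U, measurable_fst hU, rfl⟩
    · rw [MeasurableSpace.pi, MeasurableSpace.comap_iSup]
      refine iSup_le fun i => ?_
      rw [MeasurableSpace.comap_comp]
      rintro _ ⟨U, hU, rfl⟩
      apply MeasurableSpace.measurableSet_generateFrom
      refine ⟨{i}, (fun p => p.2 ⟨i, by simp⟩) ⁻¹' U, ?_, rfl⟩
      exact measurableSet_preimage (by fun_prop) hU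
  · apply MeasurableSpace.generateFrom_le
    rintro _ ⟨s, F, hF, rfl⟩
    exact measurable_restr s hF

theorem exists_disjoint_shift (s : Finset ℤ) : ∃ k : ℕ, ∀ a ∈ s, ∀ b ∈ s, a ≠ b + k := by
  refine ⟨(∑ a ∈ s, a.natAbs) + (∑ a ∈ s, a.natAbs) + 1, fun a ha b hb h => ?_⟩
  have h1 : a.natAbs ≤ ∑ a ∈ s, a.natAbs := Finset.single_le_sum (f := Int.natAbs) (by simp) ha
  have h2 : b.natAbs ≤ ∑ a ∈ s, a.natAbs := Finset.single_le_sum (f := Int.natAbs) (by simp) hb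
  push_cast at h
  zify at h1 h2
  have := abs_le.1 h1
  have := abs_le.1 h2
  linarith


theorem prod_real_apply {Ω' : Type*} [MeasurableSpace Ω'] (P : Measure Ω) (ν : Measure Ω')
    [IsProbabilityMeasure P] [IsProbabilityMeasure ν] {s : Set (Ω × Ω')} (hs : MeasurableSet s) :
    (P.prod ν).real s = ∫ ω, ν.real (Prod.mk ω ⁻¹' s) ∂P := by
  rw [measureReal_def, Measure.prod_apply hs, integral_eq_lintegral_of_nonneg_ae]
  · congr 1
    apply lintegral_congr
    intro ω
    rw [ofReal_measureReal]
  · exact Eventually.of_forall fun _ => measureReal_nonneg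
  · exact (measurable_measure_prodMk_left hs).ennreal_toReal.aestronglyMeasurable

theorem meas_section {Ω' : Type*} [MeasurableSpace Ω'] (ν : Measure Ω')
    [IsProbabilityMeasure ν] {s : Set (Ω × Ω')} (hs : MeasurableSet s) :
    Measurable (fun ω => ν.real (Prod.mk ω ⁻¹' s)) :=
  (measurable_measure_prodMk_left hs).ennreal_toReal

theorem integrable_of_bdd (P : Measure Ω) [IsProbabilityMeasure P] {g : Ω → ℝ} (hg : Measurable g)
    (h : ∀ ω, |g ω| ≤ 1) : Integrable g P :=
  Integrable.of_bound hg.aestronglyMeasurable 1 (Eventually.of_forall h)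

theorem ergodic_prod_bern [MeasurableSpace A] (P : Measure Ω) [IsProbabilityMeasure P]
    (ρ : Measure A) [IsProbabilityMeasure ρ] {R : Ω → Ω} (hR : Ergodic R P) :
    Ergodic (Prod.map R (shift : (ℤ → A) → (ℤ → A))) (P.prod (bern ρ)) := by
  set ν := bern ρ with hν
  set T := Prod.map R (shift : (ℤ → A) → (ℤ → A)) with hT
  have hTm : MeasurePreserving T (P.prod ν) (P.prod ν) :=
    hR.toMeasurePreserving.prod (bern_shift ρ)
  refine ⟨hTm, ⟨fun E hE hTE => ?_⟩⟩
  have hsec : ∀ (s : Set (Ω × (ℤ → A))) ω, |ν.real (Prod.mk ω ⁻¹' s)| ≤ 1 := fun s ω => by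
    rw [abs_of_nonneg measureReal_nonneg]; exact measureReal_le_one
  let f : Ω → ℝ := fun ω => ν.real (Prod.mk ω ⁻¹' E)
  have hfm : Measurable f := meas_section ν hE
  have hfR : f ∘ R = f := by
    funext ω
    have h1 : Prod.mk ω ⁻¹' E = shift ⁻¹' (Prod.mk (R ω) ⁻¹' E) := by
      conv_lhs => rw [← hTE]
      rfl
    simp only [f, Function.comp]
    rw [h1]
    have := (bern_shift ρ).measure_preimage (s := Prod.mk (R ω) ⁻¹' E)
      (measurable_prodMk_left hE).nullMeasurableSet
    rw [measureReal_def, measureReal_def, this]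
  obtain ⟨c, hc⟩ := hR.toPreErgodic.ae_eq_const_of_ae_eq_comp hfm hfR
  have hEc : (P.prod ν).real E = c := by
    rw [prod_real_apply P ν hE]
    rw [integral_congr_ae hc]
    simp
  have hc0 : 0 ≤ c := hEc ▸ measureReal_nonneg
  have hc1 : c ≤ 1 := hEc ▸ measureReal_le_one
  have key : ∀ ε > 0, |c - c * c| ≤ 4 * ε := by
    intro ε hε
    obtain ⟨F, ⟨s, F', hF', rfl⟩, hFE⟩ :=
      exists_measure_symmDiff_lt_of_generateFrom_isSetRing (μ := P.prod ν) FinSets.isSetRing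
        ⟨{univ}, by simp, by
          rintro _ rfl; exact ⟨∅, univ, MeasurableSet.univ, rfl⟩, by simp⟩ FinSets.generate hE
        (ENNReal.ofReal_pos.2 hε)
    set F : Set (Ω × (ℤ → A)) := (fun p : Ω × (ℤ → A) => (p.1, s.restrict p.2)) ⁻¹' F' with hFdef
    have hF : MeasurableSet F := measurable_restr s hF'
    have hFE' : (P.prod ν).real (symmDiff F E) ≤ ε :=
      ENNReal.toReal_le_of_le_ofReal hε.le hFE.le
    let g : Ω → ℝ := fun ω => ν.real (Prod.mk ω ⁻¹' F)
    have hgm : Measurable g := meas_section ν hF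
    have hg0 : ∀ ω, 0 ≤ g ω := fun ω => measureReal_nonneg
    have hg1 : ∀ ω, g ω ≤ 1 := fun ω => measureReal_le_one
    have hgc : ∫ ω, |g ω - c| ∂P ≤ ε := by
      refine le_trans ?_ hFE'
      rw [prod_real_apply P ν (hF.symmDiff hE)]
      refine integral_mono_ae ?_ ?_ ?_
      · refine integrable_of_bdd P (by fun_prop) fun ω => ?_
        rw [abs_abs, abs_le]; constructor <;> linarith [hg0 ω, hg1 ω]
      · exact integrable_of_bdd P (meas_section ν (hF.symmDiff hE)) (hsec _)
      · filter_upwards [hc] with ω hω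
        have hω' : c = ν.real (Prod.mk ω ⁻¹' E) := hω.symm
        rw [hω']
        exact abs_measureReal_sub_le_measureReal_symmDiff
          (measurable_prodMk_left hF : MeasurableSet (Prod.mk ω ⁻¹' F)).nullMeasurableSet
          (measurable_prodMk_left hE : MeasurableSet (Prod.mk ω ⁻¹' E)).nullMeasurableSet
    obtain ⟨k, hk⟩ := exists_disjoint_shift s
    have hTk : ∀ p : Ω × (ℤ → A), T^[k] p = (R^[k] p.1, shift^[k] p.2) := by
      intro p; rw [hT, Prod.map_iterate]; rfl
    have hRk := hR.toMeasurePreserving.iterate k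
    have hTkm := hTm.iterate k
    have hFk : MeasurableSet (T^[k] ⁻¹' F) := hTkm.measurable hF
    have hmix : (P.prod ν).real (F ∩ T^[k] ⁻¹' F) = ∫ ω, g ω * g (R^[k] ω) ∂P := by
      rw [prod_real_apply P ν (hF.inter hFk)]
      congr 1
      funext ω
      have h1 := bern_indep ρ s k hk (Prod.mk ω ⁻¹' F') (Prod.mk (R^[k] ω) ⁻¹' F')
        (measurable_prodMk_left hF') (measurable_prodMk_left hF')
      have h2 : Prod.mk ω ⁻¹' (F ∩ T^[k] ⁻¹' F) =
          (fun b => s.restrict b) ⁻¹' (Prod.mk ω ⁻¹' F') ∩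
          (fun b => s.restrict (shift^[k] b)) ⁻¹' (Prod.mk (R^[k] ω) ⁻¹' F') := by
        ext b
        simp [hFdef, hTk]
      rw [h2, measureReal_def, h1, ENNReal.toReal_mul]
      rfl
    have hgk : ∫ ω, |g (R^[k] ω) - c| ∂P ≤ ε := by
      have h6 : Measurable (fun ω => |g ω - c|) := by fun_prop
      have := integral_map (μ := P) hRk.measurable.aemeasurable
        (f := fun ω => |g ω - c|) h6.aestronglyMeasurable
      rw [← this, hRk.map_eq]
      exact hgc
    have hest1 : |∫ ω, g ω * g (R^[k] ω) ∂P - c * c| ≤ 2 * ε := by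
      have i1 : Integrable (fun ω => |g ω - c|) P := by
        refine integrable_of_bdd P (by fun_prop) fun ω => ?_
        rw [abs_abs, abs_le]; constructor <;> linarith [hg0 ω, hg1 ω]
      have hgkm : Measurable (fun ω => g (R^[k] ω)) := hgm.comp hRk.measurable
      have i2 : Integrable (fun ω => |g (R^[k] ω) - c|) P := by
        refine integrable_of_bdd P (by exact (hgkm.sub_const c).abs) fun ω => ?_
        rw [abs_abs, abs_le]; constructor <;> linarith [hg0 (R^[k] ω), hg1 (R^[k] ω)]
      have i3 : Integrable (fun ω => g ω * g (R^[k] ω)) P := by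
        refine integrable_of_bdd P (hgm.mul hgkm) fun ω => ?_
        rw [abs_of_nonneg (mul_nonneg (hg0 _) (hg0 _))]
        exact mul_le_one₀ (hg1 _) (hg0 _) (hg1 _)
      have e1 : ∫ ω, g ω * g (R^[k] ω) ∂P - c * c = ∫ ω, (g ω * g (R^[k] ω) - c * c) ∂P := by
        rw [integral_sub i3 (integrable_const _)]; simp
      rw [e1]
      calc |∫ ω, (g ω * g (R^[k] ω) - c * c) ∂P|
          ≤ ∫ ω, |g ω * g (R^[k] ω) - c * c| ∂P := abs_integral_le_integral_abs
        _ ≤ ∫ ω, (|g ω - c| + |g (R^[k] ω) - c|) ∂P := by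
            refine integral_mono (i3.sub (integrable_const _)).abs (i1.add i2) fun ω => ?_
            have : g ω * g (R^[k] ω) - c * c = (g ω - c) * g (R^[k] ω) + c * (g (R^[k] ω) - c) := by
              ring
            simp only [this]
            refine (abs_add_le _ _).trans ?_
            rw [abs_mul, abs_mul, abs_of_nonneg (hg0 _), abs_of_nonneg hc0]
            exact add_le_add (mul_le_of_le_one_right (abs_nonneg _) (hg1 _))
              (mul_le_of_le_one_left (abs_nonneg _) hc1)
        _ = ∫ ω, |g ω - c| ∂P + ∫ ω, |g (R^[k] ω) - c| ∂P := integral_add i1 i2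
        _ ≤ 2 * ε := by linarith
    have hTkE : T^[k] ⁻¹' E = E := Function.IsFixedPt.preimage_iterate hTE k
    have hest2 : |(P.prod ν).real (F ∩ T^[k] ⁻¹' F) - c| ≤ 2 * ε := by
      rw [← hEc]
      refine (abs_measureReal_sub_le_measureReal_symmDiff
        (hF.inter hFk).nullMeasurableSet hE.nullMeasurableSet).trans ?_
      have hsub : symmDiff (F ∩ T^[k] ⁻¹' F) E ⊆ symmDiff F E ∪ T^[k] ⁻¹' (symmDiff F E) := by
        intro p hp
        have hpe : T^[k] p ∈ E ↔ p ∈ E := by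
          conv_rhs => rw [← hTkE]
          rfl
        simp only [mem_symmDiff, mem_inter_iff, mem_preimage, mem_union] at hp ⊢
        tauto
      refine (measureReal_mono hsub).trans ((measureReal_union_le _ _).trans ?_)
      have h3 : (P.prod ν).real (T^[k] ⁻¹' (symmDiff F E)) = (P.prod ν).real (symmDiff F E) := by
        rw [measureReal_def, hTkm.measure_preimage (hF.symmDiff hE).nullMeasurableSet]; rfl
      linarith
    rw [hmix] at hest2
    rw [abs_le] at *
    constructor <;> linarith [hest1.1, hest1.2, hest2.1, hest2.2]
  have hcc : c = c * c := by
    by_contra hne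
    have hpos : 0 < |c - c * c| := abs_pos.2 (sub_ne_zero.2 hne)
    have := key (|c - c * c| / 8) (by positivity)
    linarith
  rw [eventuallyConst_set']
  have : c = 0 ∨ c = 1 := by
    rcases eq_or_ne c 0 with h | h
    · exact Or.inl h
    · right; field_simp at hcc; exact hcc.symm
  rcases this with h | h
  · left
    rw [ae_eq_empty]
    rw [h] at hEc
    exact (measureReal_eq_zero_iff).1 hEc
  · right
    rw [ae_eq_univ, prob_compl_eq_zero_iff hE]
    rw [h] at hEc
    rwa [measureReal_def, ENNReal.toReal_eq_one_iff] at hEc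

/-! ## Sturmian words and their number -/

/-- Sturmian coding of slope `α` and intercept `β`. -/
noncomputable def sturm (α β : ℝ) (i : ℤ) : Bool := decide (1 - α ≤ Int.fract (i * α + β))

/-- Sturmian words of length `n`. -/
def Words (n : ℕ) : Set (Fin n → Bool) :=
  {u | ∃ α β : ℝ, 0 < α ∧ α < 1 ∧ 0 ≤ β ∧ β < 1 ∧ ∀ i : Fin n, u i = sturm α β ((i : ℕ) : ℤ)}

theorem sturm_eq (α β : ℝ) (i : ℤ) :
    sturm α β i = decide (⌊i * α + β⌋ + 1 ≤ ⌊(i + 1) * α + β⌋) := by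
  unfold sturm
  apply decide_eq_decide.2
  rw [Int.le_floor, Int.fract]
  push_cast
  constructor <;> intro h <;> linarith

/-- Position of `α` among fractions. -/
noncomputable def fareySet (n : ℕ) (α : ℝ) : Finset (ℕ × ℕ) :=
  (Finset.range (n + 2) ×ˢ Finset.range (n + 2)).filter fun pq => (pq.1 : ℝ) ≤ pq.2 * α

/-- Position of `β` among the thresholds. -/
noncomputable def thrSet (n : ℕ) (α β : ℝ) : Finset ℕ :=
  (Finset.range (n + 2)).filter fun i => (⌊(i : ℝ) * α⌋ : ℝ) + 1 ≤ i * α + β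

theorem farey_mono (n : ℕ) {α α' : ℝ} (h : α ≤ α') : fareySet n α ⊆ fareySet n α' := by
  intro pq hpq
  simp only [fareySet, Finset.mem_filter] at hpq ⊢
  refine ⟨hpq.1, hpq.2.trans ?_⟩
  gcongr

theorem farey_eq (n : ℕ) {α α' : ℝ} (h : (fareySet n α).card = (fareySet n α').card) :
    fareySet n α = fareySet n α' := by
  rcases le_total α α' with h' | h'
  · exact Finset.eq_of_subset_of_card_le (farey_mono n h') h.ge
  · exact (Finset.eq_of_subset_of_card_le (farey_mono n h') h.le).symm

theorem farey_iff (n : ℕ) {α α' : ℝ} (h0 : 0 < α) (h1 : α < 1) (h0' : 0 < α') (h1' : α' < 1)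
    (h : fareySet n α = fareySet n α') (q : ℕ) (hq : q < n + 2) (p : ℤ) :
    (p : ℝ) ≤ q * α ↔ (p : ℝ) ≤ q * α' := by
  rcases lt_or_ge p 0 with hp | hp
  · have : (p : ℝ) ≤ 0 := by exact_mod_cast hp.le
    exact ⟨fun _ => this.trans (by positivity), fun _ => this.trans (by positivity)⟩
  · lift p to ℕ using hp
    by_cases hpn : p < n + 2
    · have := Finset.ext_iff.1 h (p, q)
      simpa [fareySet, hpn, hq] using this
    · have hqp : (q : ℝ) < p := by exact_mod_cast (by omega : q < p)
      have hq0 : (0 : ℝ) ≤ q := by positivity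
      constructor <;> intro h2 <;> push_cast at h2 <;> exfalso <;> nlinarith

theorem thr_sub (n : ℕ) {α α' β β' : ℝ} (h0 : 0 < α) (h1 : α < 1) (h0' : 0 < α') (h1' : α' < 1)
    (h : fareySet n α = fareySet n α') :
    thrSet n α β ⊆ thrSet n α' β' ∨ thrSet n α' β' ⊆ thrSet n α β := by
  have hiff := farey_iff n h0 h1 h0' h1' h
  have hfl : ∀ q : ℕ, q < n + 2 → ⌊(q : ℝ) * α⌋ = ⌊(q : ℝ) * α'⌋ := by
    intro q hq
    apply le_antisymm
    · rw [Int.le_floor, ← hiff q hq, ← Int.le_floor]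
    · rw [Int.le_floor, hiff q hq, ← Int.le_floor]
  by_contra hcon
  rw [not_or, Finset.not_subset, Finset.not_subset] at hcon
  obtain ⟨⟨i, hi, hi'⟩, ⟨j, hj, hj'⟩⟩ := hcon
  simp only [thrSet, Finset.mem_filter, Finset.mem_range, not_and, not_le] at hi hi' hj hj'
  have hi'' := hi' hi.1
  have hj'' := hj' hj.1
  rw [← hfl i hi.1] at hi''
  have hj2 := hj.2
  rw [← hfl j hj.1] at hj2
  have hi2 := hi.2
  rcases le_total j i with hij | hij
  · obtain ⟨q, rfl⟩ := Nat.exists_eq_add_of_le hij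
    have := hiff q (by omega) (⌊((j + q : ℕ) : ℝ) * α⌋ - ⌊(j : ℝ) * α⌋)
    push_cast at *
    have h3 := this.1 (by linarith)
    linarith
  · obtain ⟨q, rfl⟩ := Nat.exists_eq_add_of_le hij
    have := hiff q (by omega) (⌊((i + q : ℕ) : ℝ) * α⌋ - ⌊(i : ℝ) * α⌋)
    push_cast at *
    have h3 := this.2 (by linarith)
    linarith

theorem floor_thr (n : ℕ) {α β : ℝ} (hb0 : 0 ≤ β) (hb1 : β < 1) (i : ℕ) (hi : i < n + 2) :
    ⌊(i : ℝ) * α + β⌋ = ⌊(i : ℝ) * α⌋ + if i ∈ thrSet n α β then 1 else 0 := by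
  rw [Int.floor_eq_iff]
  have h1 := Int.floor_le ((i : ℝ) * α)
  have h2 := Int.lt_floor_add_one ((i : ℝ) * α)
  split_ifs with h <;> simp only [thrSet, Finset.mem_filter, Finset.mem_range, hi, true_and,
    not_le] at h <;> push_cast <;> constructor <;> linarith

theorem words_card (n : ℕ) : Nat.card (Words n) ≤ (n + 2) ^ 4 := by
  choose α β h0 h1 hb0 hb1 hu using fun u : Words n => u.2
  have hD : ∀ u, (fareySet n (α u)).card < (n + 2) * (n + 2) + 1 := fun u =>
    Nat.lt_succ_of_le ((Finset.card_filter_le _ _).trans (by simp))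
  have hS : ∀ u, (thrSet n (α u) (β u)).card < (n + 2) + 1 := fun u =>
    Nat.lt_succ_of_le ((Finset.card_filter_le _ _).trans (by simp))
  let enc : Words n → Fin ((n + 2) * (n + 2) + 1) × Fin ((n + 2) + 1) := fun u =>
    (⟨_, hD u⟩, ⟨_, hS u⟩)
  have hinj : Function.Injective enc := by
    intro u v huv
    simp only [enc, Prod.mk.injEq, Fin.mk.injEq] at huv
    have hF := farey_eq n huv.1
    have hiff := farey_iff n (h0 u) (h1 u) (h0 v) (h1 v) hF
    have hT : thrSet n (α u) (β u) = thrSet n (α v) (β v) := by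
      rcases thr_sub n (β := β u) (β' := β v) (h0 u) (h1 u) (h0 v) (h1 v) hF with h | h
      · exact Finset.eq_of_subset_of_card_le h huv.2.ge
      · exact (Finset.eq_of_subset_of_card_le h huv.2.le).symm
    have hfl : ∀ q : ℕ, q < n + 2 → ⌊(q : ℝ) * α u + β u⌋ = ⌊(q : ℝ) * α v + β v⌋ := by
      intro q hq
      rw [floor_thr n (hb0 u) (hb1 u) q hq, floor_thr n (hb0 v) (hb1 v) q hq, hT]
      congr 1
      apply le_antisymm
      · rw [Int.le_floor, ← hiff q hq, ← Int.le_floor]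
      · rw [Int.le_floor, hiff q hq, ← Int.le_floor]
    apply Subtype.ext
    funext i
    rw [hu u i, hu v i, sturm_eq, sturm_eq]
    have e1 := hfl i (by omega)
    have e2 := hfl (i + 1) (by omega)
    push_cast at e1 e2 ⊢
    rw [e1, e2]
  have := Nat.card_le_card_of_injective enc hinj
  refine this.trans ?_
  simp only [Nat.card_eq_fintype_card, Fintype.card_prod, Fintype.card_fin]
  nlinarith [Nat.zero_le n, Nat.zero_le (n^2), Nat.zero_le (n^3), Nat.zero_le (n^4)]

/-! ## The subshift -/

/-- The alphabet. -/
def Alph : Type := Bool × Bool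

instance : Fintype Alph := inferInstanceAs (Fintype (Bool × Bool))
instance : DecidableEq Alph := inferInstanceAs (DecidableEq (Bool × Bool))
instance : TopologicalSpace Alph := ⊥
instance : DiscreteTopology Alph := ⟨rfl⟩
instance : MeasurableSpace Alph := ⊤
instance : DiscreteMeasurableSpace Alph := ⟨fun _ => trivial⟩

/-- Sturmian coordinate. -/
def Alph.st (a : Alph) : Bool := a.1
/-- Free coordinate. -/
def Alph.fr (a : Alph) : Bool := a.2
/-- Constructor. -/
def Alph.mk (a b : Bool) : Alph := (a, b)

@[simp] theorem Alph.st_mk (a b : Bool) : (Alph.mk a b).st = a := rfl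
@[simp] theorem Alph.fr_mk (a b : Bool) : (Alph.mk a b).fr = b := rfl
theorem Alph.ext' {a b : Alph} (h1 : a.st = b.st) (h2 : a.fr = b.fr) : a = b := Prod.ext h1 h2

/-- The product of the Sturmian subshift with a full shift. -/
def XS : Set (ℤ → Alph) :=
  {z | ∀ (a : ℤ) (n : ℕ), (fun i : Fin n => (z (a + (i : ℕ))).st) ∈ Words n}

theorem XS_congr {z z' : ℤ → Alph} (hz : z ∈ XS) (h : ∀ n, (z' n).st = (z n).st) : z' ∈ XS := by
  intro a n
  simp only [h]
  exact hz a n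

theorem XS_subshift : IsSubshift XS := by
  constructor
  · have : XS = ⋂ (a : ℤ) (n : ℕ),
        (fun z : ℤ → Alph => fun i : Fin n => (z (a + (i : ℕ))).st) ⁻¹' Words n := by
      ext z; simp [XS]
    rw [this]
    refine isClosed_iInter fun a => isClosed_iInter fun n => ?_
    refine (isClosed_discrete (Words n)).preimage ?_
    exact continuous_pi fun i => continuous_of_discreteTopology.comp (continuous_apply _)
  · apply Subset.antisymm
    · rintro _ ⟨z, hz, rfl⟩ a n
      have := hz (a + 1) n
      simpa [shift, add_right_comm] using this
    · intro z hz
      refine ⟨fun n => z (n - 1), ?_, by funext n; simp [shift]⟩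
      intro a n
      have := hz (a - 1) n
      simpa [add_sub_right_comm] using this

theorem sturm_mem (α β : ℝ) (h0 : 0 < α) (h1 : α < 1) (z : ℤ → Alph)
    (hz : ∀ n, (z n).st = sturm α β n) : z ∈ XS := by
  intro a n
  refine ⟨α, Int.fract (a * α + β), h0, h1, Int.fract_nonneg _, Int.fract_lt_one _, fun i => ?_⟩
  show (z _).st = _
  rw [hz]
  unfold sturm
  apply decide_eq_decide.2
  have : ((a + ((i : ℕ) : ℤ) : ℤ) : ℝ) * α + β
      = (((i : ℕ) : ℤ) : ℝ) * α + Int.fract (a * α + β) + (⌊a * α + β⌋ : ℤ) := by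
    rw [Int.fract]; push_cast; ring
  rw [this, Int.fract_add_intCast]

theorem XS_nonempty : XS.Nonempty :=
  ⟨fun n => Alph.mk (sturm (1/2) 0 n) false, sturm_mem (1/2) 0 (by norm_num) (by norm_num) _
    (fun _ => rfl)⟩

/-- Words as functions. -/
def LF (n : ℕ) : Set (Fin n → Alph) := {u | ∃ x ∈ XS, ∀ i : Fin n, x ((i : ℕ) : ℤ) = u i}

theorem lang_eq (n : ℕ) : Lang XS n = List.ofFn '' LF n := by
  ext w
  constructor
  · rintro ⟨rfl, x, hx, h⟩
    exact ⟨w.get, ⟨x, hx, fun i => by simpa using h i⟩, List.ofFn_get w⟩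
  · rintro ⟨u, ⟨x, hx, h⟩, rfl⟩
    refine ⟨by simp, x, hx, fun i => ?_⟩
    have := h ⟨i, by simpa using i.2⟩
    simpa using this

theorem lang_card (n : ℕ) : Nat.card (Lang XS n) = Nat.card (LF n) := by
  rw [lang_eq]
  exact Nat.card_image_of_injective List.ofFn_injective _

theorem LF_words {n : ℕ} {u : Fin n → Alph} (hu : u ∈ LF n) : (fun i => (u i).st) ∈ Words n := by
  obtain ⟨x, hx, h⟩ := hu
  have := hx 0 n
  simpa [h] using this

theorem LF_card_le (n : ℕ) : Nat.card (LF n) ≤ (n + 2) ^ 4 * 2 ^ n := by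
  let e : LF n → Words n × (Fin n → Bool) := fun u =>
    (⟨fun i => (u.1 i).st, LF_words u.2⟩, fun i => (u.1 i).fr)
  have he : Function.Injective e := by
    intro u v h
    simp only [e, Prod.mk.injEq, Subtype.mk.injEq] at h
    apply Subtype.ext
    funext i
    exact Alph.ext' (congrFun h.1 i) (congrFun h.2 i)
  refine (Nat.card_le_card_of_injective e he).trans ?_
  rw [Nat.card_prod]
  have : Nat.card (Fin n → Bool) = 2 ^ n := by simp
  rw [this]
  exact Nat.mul_le_mul_right _ (words_card n)

theorem le_LF_card (n : ℕ) : 2 ^ n ≤ Nat.card (LF n) := by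
  obtain ⟨y, hy⟩ := XS_nonempty
  let e : (Fin n → Bool) → LF n := fun v =>
    ⟨fun i => Alph.mk (y ((i : ℕ) : ℤ)).st (v i),
      fun k => if h : k.toNat < n then Alph.mk (y k).st (v ⟨k.toNat, h⟩) else y k,
      XS_congr hy (fun k => by split_ifs <;> rfl), fun i => by simp⟩
  have he : Function.Injective e := by
    intro u v h
    funext i
    have h1 := congrFun (congrArg Subtype.val h) i
    exact congrArg Alph.fr h1
  have := Nat.card_le_card_of_injective e he
  have h2 : Nat.card (Fin n → Bool) = 2 ^ n := by simp
  rwa [h2] at this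

theorem tendsto_poly (C : ℝ) (k : ℕ) :
    Tendsto (fun n : ℕ => (C + k * Real.log ((n : ℝ) + 2)) / (n : ℝ)) atTop (nhds 0) := by
  have h1 : Tendsto (fun n : ℕ => Real.log ((n : ℝ) + 2) / (n : ℝ)) atTop (nhds 0) := by
    have h2 : Tendsto (fun x : ℝ => Real.log x / x) atTop (nhds 0) := by
      simpa using Real.isLittleO_log_id_atTop.tendsto_div_nhds_zero
    have h3 : Tendsto (fun n : ℕ => (n : ℝ) + 2) atTop atTop :=
      tendsto_atTop_add_const_right _ _ tendsto_natCast_atTop_atTop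
    have h4 : Tendsto (fun n : ℕ => ((n : ℝ) + 2) / (n : ℝ)) atTop (nhds 1) := by
      have h5 : Tendsto (fun n : ℕ => 1 + 2 / (n : ℝ)) atTop (nhds (1 + 0)) :=
        tendsto_const_nhds.add (tendsto_const_div_atTop_nhds_zero_nat 2)
      rw [add_zero] at h5
      refine h5.congr' ?_
      filter_upwards [eventually_gt_atTop 0] with n hn
      have : (n : ℝ) ≠ 0 := by positivity
      field_simp
    have h6 := (h2.comp h3).mul h4
    simp only [zero_mul] at h6
    refine h6.congr' ?_
    filter_upwards [eventually_gt_atTop 0] with n hn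
    have : (n : ℝ) ≠ 0 := by positivity
    have : (n : ℝ) + 2 ≠ 0 := by positivity
    simp only [Function.comp]
    field_simp
  have h7 := (tendsto_const_div_atTop_nhds_zero_nat C).add (h1.const_mul (k : ℝ))
  simp only [mul_zero, add_zero] at h7
  refine h7.congr fun n => ?_
  ring

theorem log_bound (n : ℕ) : Real.log (((n + 2) ^ 4 * 2 ^ n : ℕ) : ℝ)
    = (0 + (4 : ℕ) * Real.log ((n : ℝ) + 2)) + n * Real.log 2 := by
  push_cast
  rw [Real.log_mul (by positivity) (by positivity), Real.log_pow, Real.log_pow]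
  push_cast
  ring

theorem tendsto_upper : Tendsto (fun n : ℕ => Real.log (((n + 2) ^ 4 * 2 ^ n : ℕ) : ℝ) / (n : ℝ))
    atTop (nhds (Real.log 2)) := by
  have h := (tendsto_poly 0 4).add_const (Real.log 2)
  rw [zero_add] at h
  refine h.congr' ?_
  filter_upwards [eventually_gt_atTop 0] with n hn
  have : (n : ℝ) ≠ 0 := by positivity
  rw [log_bound]
  field_simp

theorem hTop_XS : hTop XS = Real.log 2 := by
  unfold hTop
  apply Tendsto.limsup_eq
  refine tendsto_of_tendsto_of_tendsto_of_le_of_le' (tendsto_const_nhds) tendsto_upper ?_ ?_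
  · filter_upwards [eventually_gt_atTop 0] with n hn
    have hn' : (0 : ℝ) < n := by positivity
    rw [lang_card, le_div_iff₀ hn', mul_comm, ← Real.log_pow]
    apply Real.log_le_log (by positivity)
    exact_mod_cast le_LF_card n
  · filter_upwards with n
    rw [lang_card]
    have h1 : 0 < Nat.card (LF n) := lt_of_lt_of_le (by positivity) (le_LF_card n)
    gcongr
    exact LF_card_le n

/-- Follower sets only depend on the Sturmian part and the last free letter. -/
def folG (n : ℕ) (p : Words n × Bool) : Set (ℕ → Alph) :=
  {y | ∃ B ∈ XS, (∀ i : Fin n, (B ((i : ℕ) : ℤ)).st = p.1.1 i) ∧ (B ((n : ℤ) - 1)).fr = p.2 ∧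
    ∀ k : ℕ, y k = B ((n : ℤ) - 1 + (k : ℤ))}

theorem fol_eq (n : ℕ) (w : List Alph) (hw : w ∈ Lang XS (n + 1)) :
    fol XS w ∈ Set.range (folG (n + 1)) := by
  rw [lang_eq] at hw
  obtain ⟨u, hu, rfl⟩ := hw
  refine ⟨(⟨fun i => (u i).st, LF_words hu⟩, (u (Fin.last n)).fr), ?_⟩
  have hfol : fol XS (List.ofFn u) = {y | ∃ B ∈ XS, (∀ i : Fin (n + 1), B ((i : ℕ) : ℤ) = u i) ∧
      ∀ k : ℕ, y k = B (((n + 1 : ℕ) : ℤ) - 1 + (k : ℤ))} := by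
    ext y
    simp only [fol, mem_ofPred_eq, List.length_ofFn]
    refine exists_congr fun B => and_congr_right fun _ => and_congr_left fun _ => ?_
    constructor
    · intro h i
      have := h ⟨i, by rw [List.length_ofFn]; exact i.2⟩
      rwa [List.get_ofFn] at this
    · intro h i
      rw [List.get_ofFn]
      exact h ⟨i, lt_of_lt_of_eq i.2 List.length_ofFn⟩
  rw [hfol]
  ext y
  constructor
  · rintro ⟨B, hB, h1, h2, h3⟩
    refine ⟨fun k => if h : 0 ≤ k ∧ k.toNat < n + 1 then u ⟨k.toNat, h.2⟩ else B k, ?_, ?_, ?_⟩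
    · refine XS_congr hB fun k => ?_
      split_ifs with h
      · have h4 := h1 ⟨k.toNat, h.2⟩
        simp only [Int.toNat_of_nonneg h.1] at h4
        exact h4.symm
      · rfl
    · intro i
      have h4 : (i : ℕ) < n + 1 := i.2
      have h5 : 0 ≤ ((i : ℕ) : ℤ) ∧ ((i : ℕ) : ℤ).toNat < n + 1 := ⟨by omega, by simp [h4]⟩
      show (if h : 0 ≤ ((i : ℕ) : ℤ) ∧ ((i : ℕ) : ℤ).toNat < n + 1 then
        u ⟨((i : ℕ) : ℤ).toNat, h.2⟩ else B i) = u i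
      rw [dif_pos h5]
      rfl
    · intro k
      rw [h3]
      rcases Nat.eq_zero_or_pos k with rfl | hk
      · have h4 := h1 (Fin.last n)
        simp only [Fin.val_last] at h4
        have h5 : ((n + 1 : ℕ) : ℤ) - 1 = (n : ℤ) := by push_cast; ring
        rw [h5] at h2 ⊢
        simp only [Nat.cast_zero, add_zero]
        rw [dif_pos (by simp)]
        exact Alph.ext' h4 h2
      · beta_reduce
        rw [dif_neg]
        omega
  · rintro ⟨B, hB, h1, h3⟩
    refine ⟨B, hB, fun i => by rw [h1], ?_, h3⟩
    have := h1 (Fin.last n)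
    simp only [Fin.val_last] at this
    simp [this]

theorem hFol_XS : hFol XS = 0 := by
  unfold hFol
  apply Tendsto.limsup_eq
  refine tendsto_of_tendsto_of_tendsto_of_le_of_le' (tendsto_const_nhds)
    (tendsto_poly (Real.log 2) 4) ?_ ?_
  · filter_upwards with n
    exact div_nonneg (Real.log_natCast_nonneg _) (Nat.cast_nonneg _)
  · filter_upwards [eventually_gt_atTop 0] with n hn
    obtain ⟨m, rfl⟩ : ∃ m, n = m + 1 := ⟨n - 1, by omega⟩
    have h1 : fol XS '' Lang XS (m + 1) ⊆ Set.range (folG (m + 1)) := by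
      rintro _ ⟨w, hw, rfl⟩
      exact fol_eq m w hw
    have h2 : Nat.card (fol XS '' Lang XS (m + 1)) ≤ (m + 1 + 2) ^ 4 * 2 := by
      refine (Nat.card_mono (Set.finite_range _) h1).trans ?_
      refine (Finite.card_range_le _).trans ?_
      rw [Nat.card_prod]
      have : Nat.card Bool = 2 := by simp
      rw [this]
      exact Nat.mul_le_mul_right _ (words_card _)
    gcongr
    rcases Nat.eq_zero_or_pos (Nat.card (fol XS '' Lang XS (m + 1))) with h0 | h0
    · rw [h0]
      simp only [Nat.cast_zero, Real.log_zero]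
      have : 0 ≤ Real.log (((m + 1 : ℕ) : ℝ) + 2) := Real.log_nonneg (by
        have : (0 : ℝ) ≤ ((m + 1 : ℕ) : ℝ) := Nat.cast_nonneg _
        linarith)
      have := Real.log_nonneg (by norm_num : (1 : ℝ) ≤ 2)
      positivity
    · have h3 : Real.log (Nat.card (fol XS '' Lang XS (m + 1)))
          ≤ Real.log (((m + 1 + 2) ^ 4 * 2 : ℕ) : ℝ) := by
        apply Real.log_le_log (by exact_mod_cast h0)
        exact_mod_cast h2
      refine h3.trans (le_of_eq ?_)
      push_cast
      rw [Real.log_mul (by positivity) (by positivity), Real.log_pow]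
      push_cast
      ring

/-! ## The measures -/

instance circle_prob : IsProbabilityMeasure (volume : Measure UnitAddCircle) :=
  ⟨UnitAddCircle.measure_univ⟩

/-- The fair coin. -/
noncomputable def coin : Measure Bool := (PMF.uniformOfFintype Bool).toMeasure

instance : IsProbabilityMeasure coin := by unfold coin; infer_instance

theorem coin_singleton (b : Bool) : coin {b} = 2⁻¹ := by
  unfold coin
  rw [PMF.toMeasure_apply_singleton _ _ (measurableSet_singleton b)]
  simp

/-- Representative in `[0,1)`. -/
noncomputable def rep (θ : UnitAddCircle) : ℝ := (AddCircle.measurableEquivIco 1 0 θ : ℝ)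

theorem measurable_rep : Measurable rep :=
  measurable_subtype_coe.comp (AddCircle.measurableEquivIco 1 0).measurable

theorem rep_coe (x : ℝ) : rep (x : UnitAddCircle) = Int.fract x := by
  have := AddCircle.coe_equivIco_mk_apply (p := (1 : ℝ)) x
  rw [div_one, mul_one] at this
  exact this

theorem coe_rep (θ : UnitAddCircle) : ((rep θ : ℝ) : UnitAddCircle) = θ :=
  AddCircle.coe_equivIco (p := (1 : ℝ)) (a := 0)

/-- The coding map. -/
noncomputable def code (α : ℝ) (p : UnitAddCircle × (ℤ → Bool)) : ℤ → Alph := fun n =>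
  Alph.mk (decide (1 - α ≤ rep (n • (α : UnitAddCircle) + p.1))) (p.2 n)

theorem measurable_code (α : ℝ) : Measurable (code α) := by
  refine measurable_pi_iff.2 fun n => ?_
  have h1 : Measurable (fun p : UnitAddCircle × (ℤ → Bool) =>
      decide (1 - α ≤ rep (n • (α : UnitAddCircle) + p.1))) := by
    have hm : Measurable (fun p : UnitAddCircle × (ℤ → Bool) =>
        rep (n • (α : UnitAddCircle) + p.1)) :=
      measurable_rep.comp (measurable_fst.const_add _)
    refine measurable_to_bool ?_
    have : (fun p : UnitAddCircle × (ℤ → Bool) =>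
      decide (1 - α ≤ rep (n • (α : UnitAddCircle) + p.1))) ⁻¹' {true} =
      {p | 1 - α ≤ rep (n • (α : UnitAddCircle) + p.1)} := by
      ext p; simp
    rw [this]
    exact measurableSet_le measurable_const hm
  have h2 : Measurable (fun p : UnitAddCircle × (ℤ → Bool) => p.2 n) := by fun_prop
  have h3 : Measurable (fun q : Bool × Bool => Alph.mk q.1 q.2) := Measurable.of_discrete
  exact h3.comp (h1.prodMk h2)

theorem code_mem {α : ℝ} (h0 : 0 < α) (h1 : α < 1) (p : UnitAddCircle × (ℤ → Bool)) :
    code α p ∈ XS := by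
  refine sturm_mem α (rep p.1) h0 h1 _ fun n => ?_
  have : n • (α : UnitAddCircle) + p.1 = ((n * α + rep p.1 : ℝ) : UnitAddCircle) := by
    conv_lhs => rw [← coe_rep p.1]
    rw [← zsmul_eq_mul, AddCircle.coe_add, AddCircle.coe_zsmul]
  simp only [code, Alph.st_mk, this, rep_coe, sturm]

theorem code_semiconj (α : ℝ) :
    Function.Semiconj (code α) (Prod.map ((α : UnitAddCircle) + ·) shift) shift := by
  intro p
  funext n
  simp only [code, shift, Prod.map]
  rw [add_zsmul, one_zsmul, add_assoc]

theorem ergodic_rot {α : ℝ} (h : Irrational α) :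
    Ergodic ((α : UnitAddCircle) + ·) (volume : Measure UnitAddCircle) := by
  rw [AddCircle.ergodic_add_left, addOrderOf_eq_zero_iff']
  intro n hn h0
  rw [← AddCircle.coe_nsmul, AddCircle.coe_eq_zero_iff] at h0
  obtain ⟨m, hm⟩ := h0
  simp only [nsmul_eq_mul, zsmul_eq_mul, mul_one] at hm
  apply h
  refine ⟨(m : ℚ) / n, ?_⟩
  push_cast
  rw [hm]
  have : (n : ℝ) ≠ 0 := by positivity
  field_simp

/-- The measures. -/
noncomputable def mu (α : ℝ) : Measure (ℤ → Alph) :=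
  (((volume : Measure UnitAddCircle).prod (bern coin))).map (code α)

instance (α : ℝ) : IsProbabilityMeasure (mu α) :=
  Measure.isProbabilityMeasure_map (measurable_code α).aemeasurable

theorem mu_ergodic {α : ℝ} (h : Irrational α) : Ergodic shift (mu α) :=
  (Measurable.measurePreserving (measurable_code α) _).ergodic_of_ergodic_semiconj
    (ergodic_prod_bern volume coin (ergodic_rot h)) measurable_shift (code_semiconj α)

theorem measurable_XS : MeasurableSet XS := by
  have : XS = ⋂ (a : ℤ) (n : ℕ),
      (fun z : ℤ → Alph => fun i : Fin n => (z (a + (i : ℕ))).st) ⁻¹' Words n := by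
    ext z; simp [XS]
  rw [this]
  refine MeasurableSet.iInter fun a => MeasurableSet.iInter fun n => ?_
  refine measurableSet_preimage ?_ (Set.toFinite (Words n)).measurableSet
  refine measurable_pi_iff.2 fun i => ?_
  exact (Measurable.of_discrete (f := Alph.st)).comp (measurable_pi_apply _)

theorem mu_XS {α : ℝ} (h0 : 0 < α) (h1 : α < 1) : mu α XSᶜ = 0 := by
  unfold mu
  rw [Measure.map_apply (measurable_code α) measurable_XS.compl]
  have : code α ⁻¹' XSᶜ = ∅ := by
    ext p; simp [code_mem h0 h1 p]
  rw [this, measure_empty]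

theorem cylSet_eq (n : ℕ) (w : Fin n → Alph) :
    cylSet n w = (fun z : ℤ → Alph => fun i : Fin n => z ((i : ℕ) : ℤ)) ⁻¹' {w} := by
  ext z
  simp [cylSet, funext_iff]

theorem measurable_proj (n : ℕ) :
    Measurable (fun z : ℤ → Alph => fun i : Fin n => z ((i : ℕ) : ℤ)) := by fun_prop

theorem measurable_cyl (n : ℕ) (w : Fin n → Alph) : MeasurableSet (cylSet n w) := by
  rw [cylSet_eq]
  exact measurable_proj n (measurableSet_singleton w)

theorem sum_cyl (μ : Measure (ℤ → Alph)) [IsProbabilityMeasure μ] (n : ℕ) :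
    ∑ w : Fin n → Alph, (μ (cylSet n w)).toReal = 1 := by
  simp only [cylSet_eq]
  have := sum_measureReal_preimage_singleton (μ := μ) (Finset.univ : Finset (Fin n → Alph))
    (f := fun z : ℤ → Alph => fun i : Fin n => z ((i : ℕ) : ℤ))
    (fun y _ => measurable_proj n (measurableSet_singleton y))
  simpa [measureReal_def] using this

theorem mu_cyl_le (α : ℝ) (n : ℕ) (w : Fin n → Alph) : mu α (cylSet n w) ≤ 2⁻¹ ^ n := by
  unfold mu
  rw [Measure.map_apply (measurable_code α) (measurable_cyl n w)]
  let s : Finset ℤ := (Finset.range n).map Nat.castEmbedding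
  let c : ℤ → Bool := fun k => if h : k.toNat < n then (w ⟨k.toNat, h⟩).fr else false
  have hsub : code α ⁻¹' cylSet n w ⊆ Set.univ ×ˢ (Set.pi s fun k => ({c k} : Set Bool)) := by
    rintro p hp
    refine ⟨trivial, ?_⟩
    intro k hk
    obtain ⟨m, hm, rfl⟩ := Finset.mem_map.1 hk
    have hm' : m < n := Finset.mem_range.1 hm
    have h1 := congrArg Alph.fr (hp ⟨m, hm'⟩)
    simp only [code, Alph.fr_mk] at h1
    simp [c, hm', h1]
  refine (measure_mono hsub).trans ?_
  rw [Measure.prod_prod, measure_univ, one_mul]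
  unfold bern
  rw [Measure.infinitePi_pi _ (fun i _ => measurableSet_singleton _)]
  simp [coin_singleton, s]

theorem block_lower (α : ℝ) (n : ℕ) : n * Real.log 2 ≤ blockEntropy (mu α) n := by
  unfold blockEntropy
  have h1 : (n : ℝ) * Real.log 2
      = ∑ w : Fin n → Alph, (mu α (cylSet n w)).toReal * (n * Real.log 2) := by
    rw [← Finset.sum_mul, sum_cyl, one_mul]
  rw [h1]
  refine Finset.sum_le_sum fun w _ => ?_
  set p := (mu α (cylSet n w)).toReal with hp
  have hp0 : 0 ≤ p := ENNReal.toReal_nonneg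
  have hp1 : p ≤ (2⁻¹ : ℝ) ^ n := by
    have := ENNReal.toReal_mono (by simp) (mu_cyl_le α n w)
    simpa using this
  rcases hp0.eq_or_lt with h | h
  · rw [← h]; simp
  · rw [Real.negMulLog, neg_mul, ← mul_neg]
    apply mul_le_mul_of_nonneg_left _ hp0
    have := Real.log_le_log h hp1
    rw [Real.log_pow, Real.log_inv] at this
    linarith

theorem block_upper {α : ℝ} (h0 : 0 < α) (h1 : α < 1) (n : ℕ) :
    blockEntropy (mu α) n ≤ Real.log (((n + 2) ^ 4 * 2 ^ n : ℕ) : ℝ) := by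
  classical
  set M : ℝ := (((n + 2) ^ 4 * 2 ^ n : ℕ) : ℝ) with hM
  have hM0 : 0 < M := by rw [hM]; positivity
  have hzero : ∀ w, w ∉ LF n → (mu α (cylSet n w)).toReal = 0 := by
    intro w hw
    have : mu α (cylSet n w) = 0 := by
      refine measure_mono_null ?_ (mu_XS h0 h1)
      intro z hz hzX
      exact hw ⟨z, hzX, hz⟩
    rw [this]; rfl
  have hterm : ∀ w, Real.negMulLog (mu α (cylSet n w)).toReal ≤
      (mu α (cylSet n w)).toReal * Real.log M + ((if w ∈ LF n then M⁻¹ else 0)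
        - (mu α (cylSet n w)).toReal) := by
    intro w
    by_cases hw : w ∈ LF n
    · rw [if_pos hw]
      set p := (mu α (cylSet n w)).toReal
      have hp0 : 0 ≤ p := ENNReal.toReal_nonneg
      rcases hp0.eq_or_lt with h | h
      · rw [← h]; simp; positivity
      · have h2 := Real.log_le_sub_one_of_pos (show 0 < (M * p)⁻¹ by positivity)
        rw [Real.log_inv, Real.log_mul hM0.ne' h.ne'] at h2
        have h3 := mul_le_mul_of_nonneg_left h2 hp0
        have h4 : p * ((M * p)⁻¹ - 1) = M⁻¹ - p := by field_simp
        rw [h4] at h3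
        rw [Real.negMulLog]
        linarith
    · rw [hzero w hw, if_neg hw]; simp
  unfold blockEntropy
  refine (Finset.sum_le_sum fun w _ => hterm w).trans ?_
  rw [Finset.sum_add_distrib, ← Finset.sum_mul, Finset.sum_sub_distrib, sum_cyl, one_mul,
    ← Finset.sum_filter, Finset.sum_const, nsmul_eq_mul]
  have h5 : ((Finset.univ.filter fun w => w ∈ LF n).card : ℝ) ≤ M := by
    have h6 := LF_card_le n
    rw [Nat.card_eq_fintype_card, Fintype.card_subtype] at h6
    rw [hM]
    exact_mod_cast h6
  have h7 : ((Finset.univ.filter fun w => w ∈ LF n).card : ℝ) * M⁻¹ ≤ 1 := by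
    rw [← div_eq_mul_inv]
    exact (div_le_one hM0).2 h5
  linarith

theorem mu_entropy {α : ℝ} (h0 : 0 < α) (h1 : α < 1) : KSEntropy (mu α) = Real.log 2 := by
  unfold KSEntropy
  have hlow : ∀ n : ℕ, Real.log 2 ≤ blockEntropy (mu α) (n + 1) / (n + 1) := by
    intro n
    have := block_lower α (n + 1)
    rw [le_div_iff₀ (by positivity)]
    push_cast at this
    linarith
  apply le_antisymm
  · have ht := tendsto_upper.comp (tendsto_add_atTop_nat 1)
    refine ge_of_tendsto' ht fun n => ?_
    refine (ciInf_le ⟨Real.log 2, by rintro _ ⟨n, rfl⟩; exact hlow n⟩ n).trans ?_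
    have := block_upper h0 h1 (n + 1)
    simp only [Function.comp]
    have e : ((n + 1 : ℕ) : ℝ) = (n : ℝ) + 1 := by push_cast; ring
    rw [e]
    exact div_le_div_of_nonneg_right this (by positivity)
  · exact le_ciInf hlow

theorem mu_max {α : ℝ} (hα : Irrational α) (h0 : 0 < α) (h1 : α < 1) : IsMaxMeasure XS (mu α) :=
  ⟨inferInstance, mu_XS h0 h1, mu_ergodic hα, by rw [mu_entropy h0 h1, hTop_XS]⟩

theorem mu_one {α : ℝ} (h0 : 0 < α) (h1 : α < 1) :
    mu α {z | (z 0).st = true} = ENNReal.ofReal α := by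
  have hms : MeasurableSet {z : ℤ → Alph | (z 0).st = true} :=
    measurableSet_preimage ((Measurable.of_discrete (f := Alph.st)).comp (measurable_pi_apply 0))
      (measurableSet_singleton true)
  unfold mu
  rw [Measure.map_apply (measurable_code α) hms]
  have hS : MeasurableSet {θ : UnitAddCircle | 1 - α ≤ rep θ} :=
    measurableSet_le measurable_const measurable_rep
  have : code α ⁻¹' {z | (z 0).st = true} = {θ : UnitAddCircle | 1 - α ≤ rep θ} ×ˢ Set.univ := by
    ext p
    simp [code]
  rw [this, Measure.prod_prod, measure_univ, mul_one]
  have hp := AddCircle.measurePreserving_mk 1 0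
  rw [← hp.measure_preimage hS.nullMeasurableSet, zero_add,
    Measure.restrict_apply (hp.measurable hS)]
  have e : ((fun x : ℝ => (x : UnitAddCircle)) ⁻¹' {θ : UnitAddCircle | 1 - α ≤ rep θ}) ∩ Ioc 0 1
      = Ico (1 - α) 1 := by
    ext x
    simp only [mem_inter_iff, mem_preimage, mem_ofPred_eq, rep_coe, mem_Ioc, mem_Ico]
    constructor
    · rintro ⟨h2, h3, h4⟩
      rcases h4.eq_or_lt with rfl | h4
      · rw [Int.fract_one] at h2; linarith
      · rw [Int.fract_eq_self.2 ⟨h3.le, h4⟩] at h2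
        exact ⟨h2, h4⟩
    · rintro ⟨h2, h3⟩
      have h4 : 0 < x := by linarith
      rw [Int.fract_eq_self.2 ⟨h4.le, h3⟩]
      exact ⟨h2, h4, h3.le⟩
  rw [e, Real.volume_Ico]
  congr 1
  ring

theorem uncountable_params : ¬ {α : ℝ | Irrational α ∧ 0 < α ∧ α < 1}.Countable := by
  intro h
  have h1 : (Ioo (0 : ℝ) 1).Countable := by
    refine (h.union (Set.countable_range ((↑) : ℚ → ℝ))).mono ?_
    intro x hx
    by_cases hxi : Irrational x
    · exact Or.inl ⟨hxi, hx.1, hx.2⟩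
    · right
      exact not_not.1 hxi
  have h2 := h1.measure_zero volume
  simp at h2

theorem uncountable_max : ¬ {μ : Measure (ℤ → Alph) | IsMaxMeasure XS μ}.Countable := by
  intro h
  apply uncountable_params
  refine MapsTo.countable_of_injOn (f := mu) (t := {μ | IsMaxMeasure XS μ}) ?_ ?_ h
  · rintro α ⟨h1, h2, h3⟩
    exact mu_max h1 h2 h3
  · rintro α ⟨h1, h2, h3⟩ α' ⟨h1', h2', h3'⟩ heq
    have e1 := mu_one h2 h3
    rw [heq, mu_one h2' h3'] at e1
    exact ((ENNReal.ofReal_eq_ofReal_iff h2'.le h2.le).1 e1).symm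

/-- There exists a subshift with follower entropy `0` and
positive topological entropy which has uncountably many maximum measures. -/
theorem hFol_zero_uncountably_many_max_measures :
    ∃ (A : Type) (fA : Fintype A) (X : Set (ℤ → A)),
      (letI : TopologicalSpace A := ⊥
       IsSubshift X) ∧
      hFol X = 0 ∧ 0 < hTop X ∧
      (letI : Fintype A := fA
       letI : MeasurableSpace A := ⊤
       ¬ {μ : Measure (ℤ → A) | IsMaxMeasure X μ}.Countable) := by
  refine ⟨Alph, inferInstance, XS, XS_subshift, hFol_XS, ?_, uncountable_max⟩
  rw [hTop_XS]
  exact Real.log_pos (by norm_num)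

end QFTPaper
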